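/- For every ordered pair (x, y) of vertices of the Flower snark J_5 with d(x, y) ≥ 3 and for every neighbor x' of x, there exist at least two distinct neighbors y' of y such that J_5 has a left-good 2-factor with respect to x and y containing neither the edge xx' nor the edge yy'. (This is the 2-factor criterion showing that the superedge (J_5)_{x,y} is doubly-left.) -/

import Mathlib

/-!
All the 2-factors needed have the same shape: a 9-cycle together with an 11-cycle, and hence no
further components.  Such a 2-factor is left-good with respect to `x` and `y` as soon as `x` and
`y` lie on different cycles (`leftGood_cyclePair`).

Two of them, `nineEleven false` and `nineEleven true`, suffice up to the symmetries of `J_5` that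
shift the indices and possibly exchange the letters `z` and `w` (`flowerSymm`).  The images of the
two under these 20 symmetries are 20 different 2-factors.  Two vertices at distance at least 3 are
distinct, nonadjacent and without common neighbor, and a finite search (`exists_two_fits`) shows
that for each such pair `x`, `y` and each neighbor `x'` of `x`, at least two neighbors `y'` of `y`
have the property that one of the 20 separates `x` from `y` and avoids both `xx'` and `yy'`.
-/

open SimpleGraph

/-- Vertices of the Flower snark `J_r`: a label in `Fin 4` (`0 ↦ x`, `1 ↦ y`, `2 ↦ z`,
`3 ↦ w`) together with an index in `ZMod r`. -/
abbrev FlowerVert (r : ℕ) := Fin 4 × ZMod r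

/-- The defining edges of the Flower snark `J_r`:
`x_i x_{i+1}`, `x_i y_i`, `y_i z_i`, `y_i w_i`, `z_i w_{i+1}`, `w_i z_{i+1}`. -/
def flowerRel (r : ℕ) : FlowerVert r → FlowerVert r → Prop := fun a b =>
  (a.1 = 0 ∧ b.1 = 0 ∧ b.2 = a.2 + 1) ∨
  (a.1 = 0 ∧ b.1 = 1 ∧ b.2 = a.2) ∨
  (a.1 = 1 ∧ b.1 = 2 ∧ b.2 = a.2) ∨
  (a.1 = 1 ∧ b.1 = 3 ∧ b.2 = a.2) ∨
  (a.1 = 2 ∧ b.1 = 3 ∧ b.2 = a.2 + 1) ∨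
  (a.1 = 3 ∧ b.1 = 2 ∧ b.2 = a.2 + 1)

/-- The Flower snark `J_r`. -/
def flowerSnark (r : ℕ) : SimpleGraph (FlowerVert r) :=
  SimpleGraph.fromRel (flowerRel r)

/-- `F` is a 2-factor of `H`: a spanning subgraph in which every vertex has degree
exactly `2`. -/
def IsTwoFactor {V : Type*} (H F : SimpleGraph V) : Prop :=
  F ≤ H ∧ ∀ v : V, (F.neighborSet v).ncard = 2

/-- A 2-factor `F` of `H` is left-good with respect to `x` and `y` if the components of
`F` containing `x` and `y` are distinct cycles of odd length and every other component is
a cycle of even length.  (For a 2-regular graph every component is a cycle whose length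
equals the number of its vertices.) -/
def LeftGood {V : Type*} (F : SimpleGraph V) (x y : V) : Prop :=
  ¬ F.Reachable x y ∧
  Odd {u : V | F.Reachable u x}.ncard ∧ Odd {u : V | F.Reachable u y}.ncard ∧
  ∀ v : V, ¬ F.Reachable v x → ¬ F.Reachable v y → Even {u : V | F.Reachable u v}.ncard

/-! ### Two-factors consisting of two odd cycles -/

/-- The disjoint union of a 9-cycle and an 11-cycle. -/
abbrev cyclePair : SimpleGraph (Fin 9 ⊕ Fin 11) := cycleGraph 9 ⊕g cycleGraph 11

instance : DecidableRel cyclePair.Adj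
  | .inl i, .inl j => inferInstanceAs (Decidable ((cycleGraph 9).Adj i j))
  | .inr i, .inr j => inferInstanceAs (Decidable ((cycleGraph 11).Adj i j))
  | .inl _, .inr _ => .isFalse (by simp)
  | .inr _, .inl _ => .isFalse (by simp)

theorem ncard_neighborSet_cyclePair (p : Fin 9 ⊕ Fin 11) : (cyclePair.neighborSet p).ncard = 2 := by
  rcases p with i | j
  · rw [neighborSet_sum_inl, Set.ncard_image_of_injective _ Sum.inl_injective,
      ← coe_neighborFinset, Set.ncard_coe_finset, card_neighborFinset_eq_degree]
    exact cycleGraph_degree_three_le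
  · rw [neighborSet_sum_inr, Set.ncard_image_of_injective _ Sum.inr_injective,
      ← coe_neighborFinset, Set.ncard_coe_finset, card_neighborFinset_eq_degree]
    exact cycleGraph_degree_three_le

theorem reachable_cyclePair_iff (p q : Fin 9 ⊕ Fin 11) :
    cyclePair.Reachable p q ↔ p.isLeft = q.isLeft := by
  rcases p with i | i <;> rcases q with j | j
  · simpa using (cycleGraph_preconnected i j).map
      (Embedding.sumInl (G := cycleGraph 9) (H := cycleGraph 11)).toHom
  · simpa using not_reachable_sum_inl_inr i j
  · simpa using fun h => not_reachable_sum_inl_inr j i (Reachable.symm h)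
  · simpa using (cycleGraph_preconnected i j).map
      (Embedding.sumInr (G := cycleGraph 9) (H := cycleGraph 11)).toHom

theorem odd_ncard_isLeft (b : Bool) : Odd {p : Fin 9 ⊕ Fin 11 | p.isLeft = b}.ncard := by
  rw [Set.ncard_eq_toFinset_card']
  revert b
  decide

section Transport

variable {V : Type*} (e : V ≃ Fin 9 ⊕ Fin 11)

theorem isTwoFactor_cyclePair {H : SimpleGraph V} (h : cyclePair.comap e ≤ H) :
    IsTwoFactor H (cyclePair.comap e) := by
  refine ⟨h, fun v => ?_⟩
  rw [← ncard_neighborSet_cyclePair (e v)]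
  exact Set.ncard_congr' ((Iso.comap e cyclePair).mapNeighborSet v)

theorem reachable_comap_cyclePair_iff (u v : V) :
    (cyclePair.comap e).Reachable u v ↔ (e u).isLeft = (e v).isLeft := by
  rw [← reachable_cyclePair_iff]
  exact ((Iso.comap e cyclePair).reachable_iff).symm

/-- Vertices on different cycles of a spanning union of a 9-cycle and an 11-cycle satisfy the
parity conditions, the one on even components being vacuous. -/
theorem leftGood_cyclePair {x y : V} (hxy : (e x).isLeft ≠ (e y).isLeft) :
    LeftGood (cyclePair.comap e) x y := by
  have hodd (v : V) : Odd {u : V | (cyclePair.comap e).Reachable u v}.ncard := by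
    have h := odd_ncard_isLeft (e v).isLeft
    rw [← Set.ncard_preimage_of_injective_subset_range e.injective (by simp)] at h
    simpa only [reachable_comap_cyclePair_iff, Set.preimage_ofPred_eq] using h
  refine ⟨by rwa [reachable_comap_cyclePair_iff], hodd x, hodd y, fun v hvx hvy => ?_⟩
  rw [reachable_comap_cyclePair_iff] at hvx hvy
  exact absurd (Bool.not_inj ((Bool.eq_not_of_ne hvx).symm.trans (Bool.eq_not_of_ne hvy))) hxy

end Transport

/-! ### The 2-factors of `J_5` -/

instance (r : ℕ) : DecidableRel (flowerRel r) := fun a b => by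
  unfold flowerRel; infer_instance

instance (r : ℕ) : DecidableRel (flowerSnark r).Adj := fun a b =>
  decidable_of_iff _ (SimpleGraph.fromRel_adj (flowerRel r) a b).symm

/-- The position of each vertex in one of two 2-factors of `J_5` consisting of a 9-cycle and an
11-cycle.  The rows list the positions of the `x_i`, `y_i`, `z_i` and `w_i`; consecutive positions
are adjacent. -/
def nineElevenPos (t : Bool) : FlowerVert 5 → Fin 9 ⊕ Fin 11 := fun v =>
  match t with
  | false => (![![.inl 0, .inr 0, .inr 1, .inl 2, .inl 1],
               ![.inl 8, .inr 10, .inr 2, .inl 3, .inr 6],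
               ![.inr 8, .inl 6, .inr 3, .inl 4, .inr 5],
               ![.inl 7, .inr 9, .inl 5, .inr 4, .inr 7]] :
                Fin 4 → Fin 5 → Fin 9 ⊕ Fin 11) v.1 v.2
  | true => (![![.inl 0, .inl 4, .inl 3, .inl 2, .inl 1],
              ![.inl 8, .inl 5, .inr 0, .inr 8, .inr 5],
              ![.inr 3, .inl 6, .inr 1, .inr 9, .inr 6],
              ![.inl 7, .inr 2, .inr 10, .inr 7, .inr 4]] :
                Fin 4 → Fin 5 → Fin 9 ⊕ Fin 11) v.1 v.2

theorem nineElevenPos_injective (t : Bool) : Function.Injective (nineElevenPos t) := by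
  unfold Function.Injective
  revert t
  decide

/-- `nineElevenPos` as a bijection. -/
noncomputable def nineEleven (t : Bool) : FlowerVert 5 ≃ Fin 9 ⊕ Fin 11 :=
  Equiv.ofBijective (nineElevenPos t)
    ((Fintype.bijective_iff_injective_and_card _).2 ⟨nineElevenPos_injective t, rfl⟩)

theorem nineEleven_le (t : Bool) : cyclePair.comap (nineEleven t) ≤ flowerSnark 5 := by
  have h : ∀ t u v, cyclePair.Adj (nineElevenPos t u) (nineElevenPos t v) →
      (flowerSnark 5).Adj u v := by decide +kernel
  exact fun u v huv => h t u v huv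

/-- The symmetry of the Flower snark adding `k` to all indices and, if `s` holds, exchanging the
letters `z` and `w`. -/
def flowerSymm (s : Bool) (k : ZMod 5) : FlowerVert 5 ≃ FlowerVert 5 :=
  (if s then Equiv.swap 2 3 else Equiv.refl (Fin 4)).prodCongr (Equiv.addRight k)

theorem flowerSymm_adj (s : Bool) (k : ZMod 5) {u v : FlowerVert 5}
    (h : (flowerSnark 5).Adj (flowerSymm s k u) (flowerSymm s k v)) :
    (flowerSnark 5).Adj u v := by
  revert s k u v
  decide +kernel

/-! ### The finite search -/

/-- The image of the 2-factor `nineEleven t` under the inverse of `flowerSymm s k` has `x` and `y`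
on different cycles and avoids `xx'` and `yy'`. -/
abbrev Fits (t s : Bool) (k : ZMod 5) (x x' y y' : FlowerVert 5) : Prop :=
  (nineElevenPos t (flowerSymm s k x)).isLeft ≠ (nineElevenPos t (flowerSymm s k y)).isLeft ∧
  ¬ cyclePair.Adj (nineElevenPos t (flowerSymm s k x)) (nineElevenPos t (flowerSymm s k x')) ∧
  ¬ cyclePair.Adj (nineElevenPos t (flowerSymm s k y)) (nineElevenPos t (flowerSymm s k y'))

theorem Fits.exists_twoFactor {t s : Bool} {k : ZMod 5} {x x' y y' : FlowerVert 5}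
    (h : Fits t s k x x' y y') :
    ∃ F : SimpleGraph (FlowerVert 5),
      IsTwoFactor (flowerSnark 5) F ∧ LeftGood F x y ∧ ¬ F.Adj x x' ∧ ¬ F.Adj y y' :=
  ⟨cyclePair.comap ((flowerSymm s k).trans (nineEleven t)),
    isTwoFactor_cyclePair _ fun _ _ huv => flowerSymm_adj s k (nineEleven_le t huv),
    leftGood_cyclePair _ h.1, h.2.1, h.2.2⟩

theorem exists_two_fits : ∀ x y : FlowerVert 5, x ≠ y → ¬ (flowerSnark 5).Adj x y →
    (∀ v, (flowerSnark 5).Adj x v → ¬ (flowerSnark 5).Adj v y) →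
    ∀ x', (flowerSnark 5).Adj x x' →
    ∃ y₁, (flowerSnark 5).Adj y y₁ ∧ (∃ t s k, Fits t s k x x' y y₁) ∧
      ∃ y₂, y₁ ≠ y₂ ∧ (flowerSnark 5).Adj y y₂ ∧ ∃ t s k, Fits t s k x x' y y₂ := by
  decide +kernel

/-- For every ordered pair `(x, y)` of vertices of the Flower snark `J_5` with
`d(x, y) ≥ 3` and every neighbor `x'` of `x`, there are at least two distinct neighbors
`y'` of `y` such that `J_5` has a left-good 2-factor with respect to `x` and `y`
containing neither `xx'` nor `yy'` (i.e. `(J_5)_{x,y}` is doubly-left). -/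
theorem flowerSnark_five_doubly_left (x y : FlowerVert 5)
    (hdist : 3 ≤ (flowerSnark 5).dist x y)
    (x' : FlowerVert 5) (hx' : (flowerSnark 5).Adj x x') :
    ∃ y₁ y₂ : FlowerVert 5, y₁ ≠ y₂ ∧
      (flowerSnark 5).Adj y y₁ ∧ (flowerSnark 5).Adj y y₂ ∧
      (∃ F : SimpleGraph (FlowerVert 5),
        IsTwoFactor (flowerSnark 5) F ∧ LeftGood F x y ∧ ¬ F.Adj x x' ∧ ¬ F.Adj y y₁) ∧
      (∃ F : SimpleGraph (FlowerVert 5),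
        IsTwoFactor (flowerSnark 5) F ∧ LeftGood F x y ∧ ¬ F.Adj x x' ∧ ¬ F.Adj y y₂) := by
  have hwalk (p : (flowerSnark 5).Walk x y) : 3 ≤ p.length := hdist.trans (dist_le p)
  have hne : x ≠ y := by
    rintro rfl
    simpa using hwalk .nil
  have hadj : ¬ (flowerSnark 5).Adj x y := fun h => by simpa using hwalk h.toWalk
  have hcommon (v) (h : (flowerSnark 5).Adj x v) : ¬ (flowerSnark 5).Adj v y := fun h' => by
    simpa using hwalk (.cons h h'.toWalk)
  obtain ⟨y₁, hy₁, ⟨_, _, _, h₁⟩, y₂, hy, hy₂, ⟨_, _, _, h₂⟩⟩ :=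
    exists_two_fits x y hne hadj hcommon x' hx'
  exact ⟨y₁, y₂, hy, hy₁, hy₂, h₁.exists_twoFactor, h₂.exists_twoFactor⟩
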